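/- (Lemma 5, first part.) Let Θ=×_{e∈E}[l_e,r_e] be a parameter space with minimum vector θ⁻ and maximum vector θ⁺, and suppose there exists λ ≥ 0 such that r_e ≤ (1+λ)·l_e for every edge e ∈ E. Then for every nonempty seed set S ⊆ V, σ_{θ⁺}(S) ≤ (1+λ)^n · σ_{θ⁻}(S), where n = |V|. -/

import Mathlib

/-!
The proof is a coupling by thinning. Write `l e = r e * q e` with `q e ∈ [(1 + lam)⁻¹, 1]`. Sampling
`L` with the probabilities `r` and then keeping each edge of `L` independently with probability
`q e` yields a live-edge graph distributed according to `l` (`liveExp_thin`). Whatever `L` is, it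
contains a set `P` of at most `n` edges (such as those of a spanning forest of the reached nodes) which
already reaches everything that `L` reaches (`exists_small_spanning`). All of `P` survives the
thinning with probability `∏ e ∈ P, q e ≥ (1 + lam)⁻¹ ^ n`, and the spread is then
at least that of `L` (`liveExp_lower`). Averaging over `L` gives the bound.
-/

noncomputable def reachSet {V : Type*} [Fintype V] [DecidableEq V]
    (L : Finset (V × V)) (S : Finset V) : Finset V :=
  @Finset.filter V
    (fun v => ∃ s ∈ S, Relation.ReflTransGen (fun a b : V => (a, b) ∈ L) s v)
    (fun _ => Classical.propDecidable _) Finset.univ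

noncomputable def liveProb {V : Type*} [DecidableEq V]
    (E : Finset (V × V)) (θ : V × V → ℝ) (L : Finset (V × V)) : ℝ :=
  (∏ e ∈ L, θ e) * ∏ e ∈ E \ L, (1 - θ e)

noncomputable def spread {V : Type*} [Fintype V] [DecidableEq V]
    (E : Finset (V × V)) (θ : V × V → ℝ) (S : Finset V) : ℝ :=
  ∑ L ∈ E.powerset, liveProb E θ L * (reachSet L S).card

noncomputable def OPT {V : Type*} [Fintype V] [DecidableEq V]
    (E : Finset (V × V)) (θ : V × V → ℝ) (k : ℕ) : ℝ :=
  sSup {x : ℝ | ∃ T : Finset V, T.card = k ∧ x = spread E θ T}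

noncomputable def robustRatio {V : Type*} [Fintype V] [DecidableEq V]
    (E : Finset (V × V)) (l r : V × V → ℝ) (k : ℕ) (S : Finset V) : ℝ :=
  sInf {x : ℝ | ∃ θ : V × V → ℝ, (∀ e ∈ E, l e ≤ θ e ∧ θ e ≤ r e) ∧
    x = spread E θ S / OPT E θ k}

/-- The expectation of `f L` when `L ⊆ E` is a live-edge graph for the parameters `θ`. -/
noncomputable def liveExp {V : Type*} [DecidableEq V]
    (E : Finset (V × V)) (θ : V × V → ℝ) (f : Finset (V × V) → ℝ) : ℝ :=
  ∑ L ∈ E.powerset, liveProb E θ L * f L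

/-- Conditioning on the state of one edge `a`. -/
lemma liveExp_insert {V : Type*} [DecidableEq V]
    (E : Finset (V × V)) (θ : V × V → ℝ) (f : Finset (V × V) → ℝ) (a : V × V) (ha : a ∉ E) :
    liveExp (insert a E) θ f =
      (1 - θ a) * liveExp E θ f + θ a * liveExp E θ (fun L => f (insert a L)) := by
  unfold liveExp
  rw [Finset.sum_powerset_insert ha, Finset.mul_sum, Finset.mul_sum]
  congr 1
  · refine Finset.sum_congr rfl fun L hL => ?_
    have haL : a ∉ L := fun h => ha (Finset.mem_powerset.1 hL h)
    have h1 : a ∉ E \ L := fun h => ha (Finset.mem_sdiff.1 h).1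
    rw [liveProb, liveProb, Finset.insert_sdiff_of_notMem _ haL, Finset.prod_insert h1]
    ring
  · refine Finset.sum_congr rfl fun L hL => ?_
    have haL : a ∉ L := fun h => ha (Finset.mem_powerset.1 hL h)
    have h2 : insert a E \ insert a L = E \ L := by
      ext x
      simp only [Finset.mem_sdiff, Finset.mem_insert]
      grind
    rw [liveProb, liveProb, h2, Finset.prod_insert haL]
    ring

/-- Thinning: sampling with parameters `r` and then keeping each live edge `e` with probability
`q e` amounts to sampling with parameters `r e * q e`. -/
lemma liveExp_thin {V : Type*} [DecidableEq V]
    (l r q : V × V → ℝ) (E : Finset (V × V)) :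
    (∀ e ∈ E, l e = r e * q e) → ∀ f : Finset (V × V) → ℝ,
    liveExp E l f = liveExp E r (fun L => liveExp L q f) := by
  induction E using Finset.induction_on with
  | empty =>
    intro _ f
    simp [liveExp, liveProb]
  | insert a E ha ih =>
    intro h f
    have ih' := ih fun e he => h e (Finset.mem_insert_of_mem he)
    have key : liveExp E r (fun L => liveExp (insert a L) q f) =
        (1 - q a) * liveExp E r (fun L => liveExp L q f) +
          q a * liveExp E r (fun L => liveExp L q (fun L => f (insert a L))) := by
      conv_lhs => unfold liveExp
      conv_rhs => rw [liveExp, liveExp]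
      rw [Finset.mul_sum, Finset.mul_sum, ← Finset.sum_add_distrib]
      refine Finset.sum_congr rfl fun L hL => ?_
      have haL : a ∉ L := fun h => ha (Finset.mem_powerset.1 hL h)
      have := liveExp_insert L q f a haL
      rw [liveExp] at this
      beta_reduce
      rw [this]
      ring
    rw [liveExp_insert E l f a ha, liveExp_insert E r _ a ha, key, ih', ih',
      h a (Finset.mem_insert_self a E)]
    ring

lemma liveProb_nonneg {V : Type*} [DecidableEq V]
    (E L : Finset (V × V)) (θ : V × V → ℝ) (hL : L ⊆ E) (h : ∀ e ∈ E, 0 ≤ θ e ∧ θ e ≤ 1) :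
    0 ≤ liveProb E θ L :=
  mul_nonneg (Finset.prod_nonneg fun e he => (h e (hL he)).1)
    (Finset.prod_nonneg fun e he => sub_nonneg.2 (h e (Finset.mem_sdiff.1 he).1).2)

/-- The edges of `P` are all live with probability `∏ e ∈ P, q e`, so a nonnegative `f` that is
at least `c` on that event has expectation at least `(∏ e ∈ P, q e) * c`. -/
lemma liveExp_lower {V : Type*} [DecidableEq V]
    (L P : Finset (V × V)) (q : V × V → ℝ) (hP : P ⊆ L) (hq : ∀ e ∈ L, 0 ≤ q e ∧ q e ≤ 1)
    (f : Finset (V × V) → ℝ) (hf : ∀ X, 0 ≤ f X) (c : ℝ) (hc : ∀ X, P ⊆ X → c ≤ f X) :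
    (∏ e ∈ P, q e) * c ≤ liveExp L q f := by
  -- On `X ⊆ L`, the indicator of `P ⊆ X` is the product over `e ∈ L \ X` of `0` or `1`
  -- according to whether `e ∈ P`.
  have hprod : ∏ e ∈ P, q e = ∑ X ∈ L.powerset,
      (∏ e ∈ X, q e) * ∏ e ∈ L \ X, ((1 - q e) * if e ∈ P then 0 else 1) := by
    rw [← Finset.prod_add, ← Finset.prod_subset hP]
    · exact Finset.prod_congr rfl fun e he => by simp [he]
    · intro e _ he
      simp [he]
  rw [hprod, Finset.sum_mul, liveExp]
  refine Finset.sum_le_sum fun X hX => ?_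
  have hX' := Finset.mem_powerset.1 hX
  have h0 := liveProb_nonneg L X q hX' hq
  by_cases hPX : P ⊆ X
  · have : ∏ e ∈ L \ X, ((1 - q e) * if e ∈ P then (0 : ℝ) else 1) = ∏ e ∈ L \ X, (1 - q e) := by
      refine Finset.prod_congr rfl fun e he => ?_
      have : e ∉ P := fun h => (Finset.mem_sdiff.1 he).2 (hPX h)
      simp [this]
    rw [this]
    exact mul_le_mul_of_nonneg_left (hc X hPX) h0
  · obtain ⟨e, heP, heX⟩ := Finset.not_subset.1 hPX
    have : ∏ e ∈ L \ X, ((1 - q e) * if e ∈ P then (0 : ℝ) else 1) = 0 :=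
      Finset.prod_eq_zero (Finset.mem_sdiff.2 ⟨hP heP, heX⟩) (by simp [heP])
    rw [this, mul_zero, zero_mul]
    exact mul_nonneg h0 (hf X)

lemma mem_reachSet {V : Type*} [Fintype V] [DecidableEq V]
    (L : Finset (V × V)) (S : Finset V) (v : V) :
    v ∈ reachSet L S ↔ ∃ s ∈ S, Relation.ReflTransGen (fun a b : V => (a, b) ∈ L) s v := by
  simp [reachSet]

lemma reachSet_mono {V : Type*} [Fintype V] [DecidableEq V]
    {L L' : Finset (V × V)} (h : L ⊆ L') (S : Finset V) : reachSet L S ⊆ reachSet L' S := by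
  intro v hv
  rw [mem_reachSet] at hv ⊢
  obtain ⟨s, hs, hsv⟩ := hv
  exact ⟨s, hs, Relation.ReflTransGen.mono (fun a b hab => h hab) _ _ hsv⟩

/-- At most `|V|` edges of `L` suffice to reach everything that `L` reaches: a set of nodes
`R ⊇ S`, maximal among those reached by at most `|R|` edges of `L`, is closed under `L`. -/
lemma exists_small_spanning {V : Type*} [Fintype V] [DecidableEq V]
    (L : Finset (V × V)) (S : Finset V) :
    ∃ P ⊆ L, P.card ≤ Fintype.card V ∧ reachSet L S ⊆ reachSet P S := by
  let Q : Finset V → Prop := fun R => S ⊆ R ∧ ∃ P ⊆ L, P.card ≤ R.card ∧ R ⊆ reachSet P S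
  have hQ : Q S := ⟨subset_rfl, ∅, by simp, by simp, fun s hs =>
    (mem_reachSet _ _ _).2 ⟨s, hs, .refl⟩⟩
  obtain ⟨R, -, ⟨hSR, P, hPL, hcard, hRP⟩, hmax⟩ := Finite.exists_le_maximal hQ
  refine ⟨P, hPL, hcard.trans (Finset.card_le_univ R), ?_⟩
  have closed : ∀ a b, a ∈ R → (a, b) ∈ L → b ∈ R := by
    intro a b ha hab
    by_contra hb
    have hsub : P ⊆ insert (a, b) P := Finset.subset_insert _ _
    have : Q (insert b R) := by
      refine ⟨hSR.trans (Finset.subset_insert _ _), insert (a, b) P,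
        Finset.insert_subset hab hPL, ?_, ?_⟩
      · rw [Finset.card_insert_of_notMem hb]
        exact (Finset.card_insert_le _ _).trans (Nat.succ_le_succ hcard)
      · refine Finset.insert_subset ?_ (hRP.trans (reachSet_mono hsub S))
        obtain ⟨s, hs, hsa⟩ := (mem_reachSet _ _ _).1 (reachSet_mono hsub S (hRP ha))
        exact (mem_reachSet _ _ _).2 ⟨s, hs, hsa.tail (Finset.mem_insert_self _ _)⟩
    exact hb (hmax this (Finset.subset_insert _ _) (Finset.mem_insert_self _ _))
  intro v hv
  obtain ⟨s, hs, hsv⟩ := (mem_reachSet _ _ _).1 hv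
  apply hRP
  induction hsv with
  | refl => exact hSR hs
  | tail h1 h2 ih => exact closed _ _ (ih ((mem_reachSet _ _ _).2 ⟨s, hs, h1⟩)) h2

/-- Lemma 5, first part: if `r e ≤ (1+λ)·l e` for every edge `e ∈ E`, then
for every nonempty seed set `S`, `σ_{θ⁺}(S) ≤ (1+λ)^n · σ_{θ⁻}(S)` where `n = |V|`. -/
theorem spread_multiplicative_ratio {V : Type*} [Fintype V] [DecidableEq V]
    (E : Finset (V × V)) (n : ℕ) (hn : n = Fintype.card V)
    (l r : V × V → ℝ)
    (hlr : ∀ e ∈ E, 0 ≤ l e ∧ l e ≤ r e ∧ r e ≤ 1)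
    (lam : ℝ) (hlam : 0 ≤ lam)
    (hmul : ∀ e ∈ E, r e ≤ (1 + lam) * l e)
    (S : Finset V) (hS : S.Nonempty) :
    spread E r S ≤ (1 + lam) ^ n * spread E l S := by
  have hpos : 0 < 1 + lam := by linarith
  -- Where `r e = 0` also `l e = 0`, and any retention probability in the range works.
  let q : V × V → ℝ := fun e => if r e = 0 then 1 else l e / r e
  have hq : ∀ e ∈ E, l e = r e * q e ∧ (1 + lam)⁻¹ ≤ q e ∧ q e ≤ 1 := by
    intro e he
    obtain ⟨h0, h1, -⟩ := hlr e he
    by_cases hr : r e = 0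
    · simp only [q, hr, if_true, zero_mul]
      exact ⟨by linarith, inv_le_one_of_one_le₀ (by linarith), le_rfl⟩
    · have hr' : 0 < r e := lt_of_le_of_ne (h0.trans h1) (Ne.symm hr)
      simp only [q, hr, if_false]
      refine ⟨by field_simp, ?_, (div_le_one hr').2 h1⟩
      rw [le_div_iff₀ hr', inv_mul_le_iff₀ hpos]
      exact hmul e he
  have hspread : ∀ θ, spread E θ S = liveExp E θ (fun L => ((reachSet L S).card : ℝ)) :=
    fun _ => rfl
  rw [hspread, hspread, liveExp_thin l r q E fun e he => (hq e he).1, liveExp, liveExp,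
    Finset.mul_sum]
  refine Finset.sum_le_sum fun L hL => ?_
  have hLE := Finset.mem_powerset.1 hL
  rw [mul_left_comm]
  refine mul_le_mul_of_nonneg_left ?_ (liveProb_nonneg E L r hLE fun e he =>
    ⟨(hlr e he).1.trans (hlr e he).2.1, (hlr e he).2.2⟩)
  obtain ⟨P, hPL, hcard, hreach⟩ := exists_small_spanning L S
  have hlow := liveExp_lower L P q hPL
    (fun e he => ⟨(inv_pos.2 hpos).le.trans (hq e (hLE he)).2.1, (hq e (hLE he)).2.2⟩)
    (fun L => ((reachSet L S).card : ℝ)) (fun X => Nat.cast_nonneg _) (reachSet L S).card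
    (fun X hX => Nat.cast_le.2 (Finset.card_le_card (hreach.trans (reachSet_mono hX S))))
  have hprod : (1 + lam)⁻¹ ^ n ≤ ∏ e ∈ P, q e := by
    calc (1 + lam)⁻¹ ^ n ≤ (1 + lam)⁻¹ ^ P.card :=
          pow_le_pow_of_le_one (inv_pos.2 hpos).le (inv_le_one_of_one_le₀ (by linarith))
            (hn ▸ hcard)
      _ = ∏ e ∈ P, (1 + lam)⁻¹ := by rw [Finset.prod_const]
      _ ≤ ∏ e ∈ P, q e := Finset.prod_le_prod (fun _ _ => (inv_pos.2 hpos).le)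
          fun e he => (hq e (hLE (hPL he))).2.1
  have := (mul_le_mul_of_nonneg_right hprod
    (Nat.cast_nonneg (α := ℝ) (reachSet L S).card)).trans hlow
  rwa [inv_pow, inv_mul_le_iff₀ (pow_pos hpos n)] at this
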